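/- Freeness criterion for line arrangements: let K have characteristic zero and let A be a set of d ≥ 3 distinct lines of ℙ² that are not all concurrent, with defining polynomial f_A and Jacobian ideal Jac(f_A) ⊆ S = K[x₀,x₁,x₂]. Let ℓ be a general linear form with dual point Q = ℓ∨, let r_A = (f_A, ∂f_A/∂ℓ) : Jac(f_A) be the general residual, and set I := r_A ∩ I_Q. Then the following are equivalent: (a) the line arrangement A is free, i.e. Jac(f_A) is a saturated ideal (Jac(f_A) : (x₀,x₁,x₂) = Jac(f_A)); (b) the ideal I is generated by two homogeneous polynomials of degrees a and b with a + b = d + 1 and a, b ≥ 2. -/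

import Mathlib

open MvPolynomial

/-- The derivative `∂f/∂ℓ = Σᵢ aᵢ·∂f/∂xᵢ` of `f` in the direction of the linear form
`ℓ = Σᵢ aᵢxᵢ` with coefficient vector `a`. -/
noncomputable def lderiv {K : Type*} [CommRing K] {m : ℕ} (a : Fin m → K)
    (f : MvPolynomial (Fin m) K) : MvPolynomial (Fin m) K :=
  ∑ i, a i • pderiv i f

/-- The Jacobian ideal of `f`, generated by all partial derivatives of `f`. -/
noncomputable def jacobianIdeal {K : Type*} [CommRing K] {m : ℕ}
    (f : MvPolynomial (Fin m) K) : Ideal (MvPolynomial (Fin m) K) :=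
  Ideal.span (Set.range fun i => pderiv i f)

/-- The general residual of the arrangement with defining polynomial `f` with respect to
the linear form with coefficient vector `a`: `r = (f, ∂f/∂ℓ) : Jac(f)`. -/
noncomputable def genResidual {K : Type*} [CommRing K] {m : ℕ} (a : Fin m → K)
    (f : MvPolynomial (Fin m) K) : Ideal (MvPolynomial (Fin m) K) :=
  (Ideal.span {f, lderiv a f}).colon (jacobianIdeal f)

/-- The homogeneous (prime) ideal `I_Q` of the point `Q` with coordinate vector `a`,
generated by the linear forms vanishing at `Q`. -/
noncomputable def pointIdeal {K : Type*} [CommRing K] {m : ℕ} (a : Fin m → K) :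
    Ideal (MvPolynomial (Fin m) K) :=
  Ideal.span {h : MvPolynomial (Fin m) K | h.IsHomogeneous 1 ∧ eval a h = 0}


section Aux
variable {K : Type*} [Field K]

lemma hc_mul_aux (n e : ℕ) (p F : MvPolynomial (Fin 3) K) (hF : F.IsHomogeneous e) :
    homogeneousComponent n (p * F) =
      if e ≤ n then homogeneousComponent (n - e) p * F else 0 := by
  induction p using MvPolynomial.induction_on' with
  | monomial m c =>
    have h1 : (monomial m c).IsHomogeneous m.degree := isHomogeneous_monomial c rfl
    rw [homogeneousComponent_of_mem ((mem_homogeneousSubmodule _ _).2 (h1.mul hF)),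
      homogeneousComponent_of_mem ((mem_homogeneousSubmodule _ _).2 h1)]
    split_ifs <;> first | rfl | omega
  | add p q hp hq =>
    rw [add_mul, map_add, hp, hq, map_add, add_mul]
    split_ifs <;> simp

lemma hc_mul (n e : ℕ) (p F : MvPolynomial (Fin 3) K) (hF : F.IsHomogeneous e) :
    homogeneousComponent (n + e) (p * F) = homogeneousComponent n p * F := by
  simp [hc_mul_aux _ _ _ _ hF]

lemma hc_mul_lt (n e : ℕ) (p F : MvPolynomial (Fin 3) K) (hF : F.IsHomogeneous e) (h : n < e) :
    homogeneousComponent n (p * F) = 0 := by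
  simp [hc_mul_aux _ _ _ _ hF, h]

lemma koszul2 {u v s t : MvPolynomial (Fin 3) K} (huv : IsRelPrime u v) (hv : v ≠ 0)
    (h : u * s + v * t = 0) : ∃ w, s = v * w ∧ t = - (u * w) := by
  have hd : v ∣ u * s := ⟨-t, by linear_combination h⟩
  obtain ⟨w, hw⟩ := huv.symm.dvd_of_dvd_mul_left hd
  refine ⟨w, hw, ?_⟩
  apply mul_left_cancel₀ hv
  rw [hw] at h
  linear_combination h

lemma relprime_X {i j : Fin 3} (hij : i ≠ j) :
    IsRelPrime (X i : MvPolynomial (Fin 3) K) (X j) := by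
  have hi : Irreducible (X i : MvPolynomial (Fin 3) K) := MvPolynomial.X_prime.irreducible
  rw [hi.isRelPrime_iff_not_dvd]
  rw [X_dvd_X]
  simpa using hij

lemma koszul3 (p0 p1 p2 : MvPolynomial (Fin 3) K) (h : X 0 * p0 + X 1 * p1 + X 2 * p2 = 0) :
    ∃ w0 w1 w2, p0 = X 1 * w2 - X 2 * w1 ∧ p1 = X 2 * w0 - X 0 * w2 ∧
      p2 = X 0 * w1 - X 1 * w0 := by
  have h0 : p0 ∈ Ideal.span ((X : Fin 3 → MvPolynomial (Fin 3) K) '' {1, 2}) := by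
    have h1 : p0 * X 0 ∈ Ideal.span ((X : Fin 3 → MvPolynomial (Fin 3) K) '' {1, 2}) := by
      have : p0 * X 0 = (-p1) * X 1 + (-p2) * X 2 := by linear_combination h
      rw [this]
      exact Ideal.add_mem _
        (Ideal.mul_mem_left _ _ (Ideal.subset_span ⟨1, by simp, rfl⟩))
        (Ideal.mul_mem_left _ _ (Ideal.subset_span ⟨2, by simp, rfl⟩))
    rw [mem_ideal_span_X_image] at h1 ⊢
    intro m hm
    obtain ⟨i, hi, hmi⟩ := h1 (m + Finsupp.single 0 1) (by
      rw [mem_support_iff] at hm ⊢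
      rwa [coeff_mul_X])
    refine ⟨i, hi, ?_⟩
    have : i ≠ 0 := by rintro rfl; simp at hi
    simpa [Finsupp.single_apply, this.symm] using hmi
  rw [Set.image_pair, Ideal.mem_span_pair] at h0
  obtain ⟨c, b, hcb⟩ := h0
  obtain ⟨w, h1, h2⟩ := koszul2 (K := K) (u := X 1) (v := X 2) (s := p1 + X 0 * c)
    (t := p2 + X 0 * b) (relprime_X (by decide)) (X_ne_zero _) (by rw [← hcb] at h; linear_combination h)
  refine ⟨w, -b, c, ?_, ?_, ?_⟩
  · linear_combination -hcb
  · linear_combination h1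
  · linear_combination h2

/-- Syzygies of F. -/
noncomputable def Syz (F : Fin 3 → MvPolynomial (Fin 3) K) :
    Submodule (MvPolynomial (Fin 3) K) (Fin 3 → MvPolynomial (Fin 3) K) :=
  LinearMap.ker (Fintype.linearCombination (MvPolynomial (Fin 3) K) F)

lemma mem_Syz {F v : Fin 3 → MvPolynomial (Fin 3) K} :
    v ∈ Syz F ↔ v 0 * F 0 + v 1 * F 1 + v 2 * F 2 = 0 := by
  simp [Syz, Fintype.linearCombination_apply, Fin.sum_univ_three]

lemma mem_spanF {F : Fin 3 → MvPolynomial (Fin 3) K} {u : MvPolynomial (Fin 3) K} :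
    u ∈ Ideal.span (Set.range F) ↔
      ∃ w : Fin 3 → MvPolynomial (Fin 3) K, w 0 * F 0 + w 1 * F 1 + w 2 * F 2 = u := by
  rw [Ideal.span, ← Fintype.range_linearCombination (MvPolynomial (Fin 3) K), LinearMap.mem_range]
  simp only [Fintype.linearCombination_apply, Fin.sum_univ_three, smul_eq_mul]

lemma sat_of_free (F σ τ : Fin 3 → MvPolynomial (Fin 3) K)
    (hspan : Syz F = Submodule.span _ {σ, τ})
    (hind : ∀ p q : MvPolynomial (Fin 3) K, p • σ + q • τ = 0 → p = 0 ∧ q = 0)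
    (u : MvPolynomial (Fin 3) K) (hu : ∀ k, X k * u ∈ Ideal.span (Set.range F)) :
    u ∈ Ideal.span (Set.range F) := by
  choose w hw using fun k => mem_spanF.1 (hu k)
  have key : ∀ i j, ∃ p q : MvPolynomial (Fin 3) K,
      p • σ + q • τ = (X j : MvPolynomial (Fin 3) K) • w i - (X i : MvPolynomial (Fin 3) K) • w j := by
    intro i j
    rw [← Submodule.mem_span_pair, ← hspan, mem_Syz]
    simp only [Pi.sub_apply, Pi.smul_apply, smul_eq_mul]
    linear_combination X j * hw i - X i * hw j
  obtain ⟨p0, q0, h0⟩ := key 1 2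
  obtain ⟨p1, q1, h1⟩ := key 2 0
  obtain ⟨p2, q2, h2⟩ := key 0 1
  have hz := hind (X 0 * p0 + X 1 * p1 + X 2 * p2) (X 0 * q0 + X 1 * q1 + X 2 * q2) (by
    ext1 k
    have h0 := congrFun h0 k
    have h1 := congrFun h1 k
    have h2 := congrFun h2 k
    simp only [Pi.add_apply, Pi.sub_apply, Pi.smul_apply, smul_eq_mul, Pi.zero_apply] at *
    linear_combination X 0 * h0 + X 1 * h1 + X 2 * h2)
  obtain ⟨a0, a1, a2, ha0, ha1, ha2⟩ := koszul3 _ _ _ hz.1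
  obtain ⟨b0, b1, b2, hb0, hb1, hb2⟩ := koszul3 _ _ _ hz.2
  -- now p0 = X 1 a2 - X 2 a1 etc.
  have hdiv : ∀ k, ∃ c, w 0 k + a0 * σ k + b0 * τ k = X 0 * c := by
    intro k
    have h1 := congrFun h1 k
    have h2 := congrFun h2 k
    simp only [Pi.add_apply, Pi.sub_apply, Pi.smul_apply, smul_eq_mul] at *
    obtain ⟨c, hc, -⟩ := koszul2 (K := K) (u := X 1) (v := X 0) (s := w 0 k + a0 * σ k + b0 * τ k)
      (t := - (w 1 k + a1 * σ k + b1 * τ k)) (relprime_X (by decide)) (X_ne_zero _) (by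
        rw [ha2, hb2] at h2
        linear_combination -h2)
    exact ⟨c, hc⟩
  choose c hc using hdiv
  have hσ : σ ∈ Syz F := hspan ▸ Submodule.subset_span (by simp)
  have hτ : τ ∈ Syz F := hspan ▸ Submodule.subset_span (by simp)
  rw [mem_Syz] at hσ hτ
  refine mem_spanF.2 ⟨c, ?_⟩
  apply mul_left_cancel₀ (X_ne_zero (R := K) (0 : Fin 3))
  rw [← hw 0]
  linear_combination -(hc 0) * F 0 - hc 1 * F 1 - hc 2 * F 2 + a0 * hσ + b0 * hτ


lemma hcv_mem {F v : Fin 3 → MvPolynomial (Fin 3) K} {e : ℕ} (hF : ∀ k, (F k).IsHomogeneous e)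
    (hv : v ∈ Syz F) (n : ℕ) : (fun k => homogeneousComponent n (v k)) ∈ Syz F := by
  rw [mem_Syz] at hv ⊢
  have := congrArg (homogeneousComponent (n + e)) hv
  simpa [hc_mul _ _ _ _ (hF _)] using this

lemma sum_hc_of_le (N : ℕ) (p : MvPolynomial (Fin 3) K) (h : p.totalDegree < N) :
    ∑ i ∈ Finset.range N, homogeneousComponent i p = p := by
  conv_rhs => rw [← sum_homogeneousComponent p]
  symm
  apply Finset.sum_subset
  · intro i hi
    rw [Finset.mem_range] at *
    omega
  · intro i _ hi
    apply homogeneousComponent_eq_zero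
    rw [Finset.mem_range] at hi
    omega

lemma exists_homog_gens {F : Fin 3 → MvPolynomial (Fin 3) K} {e : ℕ}
    (hF : ∀ k, (F k).IsHomogeneous e) :
    ∃ T : Finset (Fin 3 → MvPolynomial (Fin 3) K),
      (∀ v ∈ T, ∃ s, ∀ k, (v k).IsHomogeneous s) ∧
      Submodule.span (MvPolynomial (Fin 3) K) (T : Set (Fin 3 → MvPolynomial (Fin 3) K)) = Syz F := by
  let H : Set (Fin 3 → MvPolynomial (Fin 3) K) :=
    {v | v ∈ Syz F ∧ ∃ s, ∀ k, (v k).IsHomogeneous s}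
  have hH : Submodule.span (MvPolynomial (Fin 3) K) H = Syz F := by
    apply le_antisymm
    · rw [Submodule.span_le]
      exact fun v hv => hv.1
    · intro v hv
      have : v = ∑ n ∈ Finset.range ((v 0).totalDegree + (v 1).totalDegree + (v 2).totalDegree + 1),
          (fun k => homogeneousComponent n (v k)) := by
        ext1 k
        rw [Finset.sum_apply, sum_hc_of_le]
        fin_cases k <;> simp <;> omega
      rw [this]
      refine Submodule.sum_mem _ fun n _ => Submodule.subset_span ⟨hcv_mem hF hv n, n, fun k => ?_⟩
      exact homogeneousComponent_isHomogeneous _ _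
  have hfg : (Submodule.span (MvPolynomial (Fin 3) K) H).FG := IsNoetherian.noetherian _
  rw [Submodule.fg_span_iff_fg_span_finset_subset] at hfg
  obtain ⟨T, hT, hs⟩ := hfg
  exact ⟨T, fun v hv => (hT hv).2, hs ▸ hH⟩

lemma mem_m_of_coeff_zero {p : MvPolynomial (Fin 3) K} (h : coeff 0 p = 0) :
    p ∈ Ideal.span (Set.range (X : Fin 3 → MvPolynomial (Fin 3) K)) := by
  rw [← Set.image_univ, mem_ideal_span_X_image]
  intro m hm
  by_contra hcon
  push Not at hcon
  have : m = 0 := by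
    ext i
    simpa using hcon i (Set.mem_univ _)
  rw [mem_support_iff, this] at hm
  exact hm h

lemma coeff_zero_of_mem_m {p : MvPolynomial (Fin 3) K}
    (h : p ∈ Ideal.span (Set.range (X : Fin 3 → MvPolynomial (Fin 3) K))) : coeff 0 p = 0 := by
  obtain ⟨w, rfl⟩ := mem_spanF.1 h
  simp [coeff_mul_X']

lemma exists_min_gens {F : Fin 3 → MvPolynomial (Fin 3) K} {e : ℕ}
    (hF : ∀ k, (F k).IsHomogeneous e) :
    ∃ T : Finset (Fin 3 → MvPolynomial (Fin 3) K),
      (∀ v ∈ T, ∃ s, ∀ k, (v k).IsHomogeneous s) ∧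
      Submodule.span (MvPolynomial (Fin 3) K) (T : Set (Fin 3 → MvPolynomial (Fin 3) K)) = Syz F ∧
      ∀ p : T → MvPolynomial (Fin 3) K, ∑ i, p i • (i : Fin 3 → MvPolynomial (Fin 3) K) = 0 →
        ∀ i, coeff 0 (p i) = 0 := by
  classical
  have hex : ∃ n, ∃ T : Finset (Fin 3 → MvPolynomial (Fin 3) K), T.card = n ∧
      (∀ v ∈ T, ∃ s, ∀ k, (v k).IsHomogeneous s) ∧
      Submodule.span (MvPolynomial (Fin 3) K) (T : Set (Fin 3 → MvPolynomial (Fin 3) K)) = Syz F := by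
    obtain ⟨T, h1, h2⟩ := exists_homog_gens hF
    exact ⟨_, T, rfl, h1, h2⟩
  obtain ⟨T, hcard, h1, h2⟩ := Nat.find_spec hex
  refine ⟨T, h1, h2, fun p hp j => ?_⟩
  by_contra hj
  choose deg hdeg using h1
  set s := deg j j.2 with hs
  have hjmem : (j : Fin 3 → MvPolynomial (Fin 3) K) ∈ Submodule.span (MvPolynomial (Fin 3) K)
      ((T.erase j : Finset _) : Set (Fin 3 → MvPolynomial (Fin 3) K)) := by
    have hsum : (C (coeff 0 (p j)) : MvPolynomial (Fin 3) K) • (j : Fin 3 → MvPolynomial (Fin 3) K)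
        = - ∑ i ∈ Finset.univ.erase j,
          (if deg i i.2 ≤ s then homogeneousComponent (s - deg i i.2) (p i) else 0) •
            (i : Fin 3 → MvPolynomial (Fin 3) K) := by
      rw [eq_neg_iff_add_eq_zero]
      have h0 : ∑ i : T, (if deg i i.2 ≤ s then homogeneousComponent (s - deg i i.2) (p i) else 0) •
            (i : Fin 3 → MvPolynomial (Fin 3) K) = 0 := by
        ext1 k
        have := congrArg (homogeneousComponent s) (congrFun hp k)
        simp only [Finset.sum_apply, Pi.smul_apply, smul_eq_mul, map_sum, Pi.zero_apply,
          map_zero] at this ⊢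
        refine Eq.trans (Finset.sum_congr rfl fun i _ => ?_) this
        rw [hc_mul_aux s (deg i i.2) (p i) _ (hdeg i i.2 k)]
        split_ifs <;> simp
      rw [← Finset.add_sum_erase _ _ (Finset.mem_univ j)] at h0
      simpa [← hs] using h0
    have hunit : (j : Fin 3 → MvPolynomial (Fin 3) K) =
        (C (coeff 0 (p j))⁻¹ : MvPolynomial (Fin 3) K) •
        ((C (coeff 0 (p j)) : MvPolynomial (Fin 3) K) • (j : Fin 3 → MvPolynomial (Fin 3) K)) := by
      rw [smul_smul, ← C_mul, inv_mul_cancel₀ hj, C_1, one_smul]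
    suffices hm : (C (coeff 0 (p j)) : MvPolynomial (Fin 3) K) •
        (j : Fin 3 → MvPolynomial (Fin 3) K) ∈ Submodule.span (MvPolynomial (Fin 3) K)
        ((T.erase j : Finset _) : Set (Fin 3 → MvPolynomial (Fin 3) K)) by
      have h5 := Submodule.smul_mem _ (C (coeff 0 (p j))⁻¹ : MvPolynomial (Fin 3) K) hm
      rwa [← hunit] at h5
    rw [hsum]
    apply Submodule.neg_mem
    refine Submodule.sum_mem _ fun i hi => Submodule.smul_mem _ _ (Submodule.subset_span ?_)
    simp only [Finset.mem_coe, Finset.mem_erase]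
    exact ⟨fun h => (Finset.mem_erase.1 hi).1 (Subtype.ext h), i.2⟩
  have hlt : (T.erase j).card < Nat.find hex := by
    rw [← hcard]
    exact Finset.card_erase_lt_of_mem j.2
  refine Nat.find_min hex hlt ⟨T.erase j, rfl, fun v hv => ⟨_, hdeg v (Finset.mem_of_mem_erase hv)⟩, ?_⟩
  rw [← h2]
  apply le_antisymm
  · apply Submodule.span_mono
    intro v hv
    exact Finset.mem_of_mem_erase hv
  · rw [Submodule.span_le]
    intro v hv
    by_cases hvj : v = j
    · rw [hvj]; exact hjmem
    · exact Submodule.subset_span (Finset.mem_coe.2 (Finset.mem_erase.2 ⟨hvj, hv⟩))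

lemma indep_of_sat {F : Fin 3 → MvPolynomial (Fin 3) K}
    (T : Finset (Fin 3 → MvPolynomial (Fin 3) K))
    (hspan : Submodule.span (MvPolynomial (Fin 3) K)
      (T : Set (Fin 3 → MvPolynomial (Fin 3) K)) = Syz F)
    (hmin : ∀ p : T → MvPolynomial (Fin 3) K,
      ∑ i, p i • (i : Fin 3 → MvPolynomial (Fin 3) K) = 0 → ∀ i, coeff 0 (p i) = 0)
    (hsat : ∀ u : MvPolynomial (Fin 3) K, (∀ k, X k * u ∈ Ideal.span (Set.range F)) →
      u ∈ Ideal.span (Set.range F)) :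
    LinearIndependent (MvPolynomial (Fin 3) K)
      (fun i : T => (i : Fin 3 → MvPolynomial (Fin 3) K)) := by
  classical
  let Φ : (T → MvPolynomial (Fin 3) K) →ₗ[MvPolynomial (Fin 3) K] (Fin 3 → MvPolynomial (Fin 3) K) :=
    Fintype.linearCombination (MvPolynomial (Fin 3) K)
      (fun i : T => (i : Fin 3 → MvPolynomial (Fin 3) K))
  have hΦ : ∀ p, Φ p = ∑ i, p i • (i : Fin 3 → MvPolynomial (Fin 3) K) := fun p =>
    Fintype.linearCombination_apply _ _ _
  have hrange : LinearMap.range Φ = Syz F := by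
    rw [Fintype.range_linearCombination, ← hspan]
    congr 1
    simp
  have hR : LinearMap.ker Φ ≤
      Ideal.span (Set.range (X : Fin 3 → MvPolynomial (Fin 3) K)) • LinearMap.ker Φ := by
    intro p hp
    have hp0 := hmin p (by rw [← hΦ]; exact hp)
    choose P hP using fun i => mem_spanF.1 (mem_m_of_coeff_zero (hp0 i))
    let Q : Fin 3 → T → MvPolynomial (Fin 3) K := fun j i => P i j
    have hpQ : p = (X 0 : MvPolynomial (Fin 3) K) • Q 0 + (X 1 : MvPolynomial (Fin 3) K) • Q 1 +
        (X 2 : MvPolynomial (Fin 3) K) • Q 2 := by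
      ext1 i
      simp only [Pi.add_apply, Pi.smul_apply, smul_eq_mul, Q]
      rw [← hP i]; ring
    have hsum : (X 0 : MvPolynomial (Fin 3) K) • Φ (Q 0) + (X 1 : MvPolynomial (Fin 3) K) • Φ (Q 1) +
        (X 2 : MvPolynomial (Fin 3) K) • Φ (Q 2) = 0 := by
      rw [← map_smul, ← map_smul, ← map_smul, ← map_add, ← map_add, ← hpQ]
      exact hp
    have hM : ∀ j, Φ (Q j) 0 * F 0 + Φ (Q j) 1 * F 1 + Φ (Q j) 2 * F 2 = 0 := by
      intro j
      rw [← mem_Syz, ← hrange]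
      exact ⟨_, rfl⟩
    have hk : ∀ k, ∃ w0 w1 w2, Φ (Q 0) k = X 1 * w2 - X 2 * w1 ∧ Φ (Q 1) k = X 2 * w0 - X 0 * w2 ∧
      Φ (Q 2) k = X 0 * w1 - X 1 * w0 := by
      intro k
      apply koszul3
      simpa using congrFun hsum k
    choose w0 w1 w2 hw0 hw1 hw2 using hk
    set u0 := w0 0 * F 0 + w0 1 * F 1 + w0 2 * F 2 with hu0
    set u1 := w1 0 * F 0 + w1 1 * F 1 + w1 2 * F 2 with hu1
    set u2 := w2 0 * F 0 + w2 1 * F 1 + w2 2 * F 2 with hu2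
    have e0 : X 1 * u2 - X 2 * u1 = 0 := by
      have := hM 0
      rw [hw0, hw0, hw0] at this
      linear_combination this
    have e1 : X 2 * u0 - X 0 * u2 = 0 := by
      have := hM 1
      rw [hw1, hw1, hw1] at this
      linear_combination this
    have e2 : X 0 * u1 - X 1 * u0 = 0 := by
      have := hM 2
      rw [hw2, hw2, hw2] at this
      linear_combination this
    obtain ⟨u, hu, hu'⟩ := koszul2 (K := K) (u := X 1) (v := X 0) (s := u0) (t := -u1)
      (relprime_X (by decide)) (X_ne_zero _) (by linear_combination -e2)
    have hu2' : u2 = X 2 * u := by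
      apply mul_left_cancel₀ (X_ne_zero (R := K) (0 : Fin 3))
      rw [hu] at e1
      linear_combination -e1
    have hu1' : u1 = X 1 * u := by linear_combination -hu'
    obtain ⟨w, hw⟩ := mem_spanF.1 (hsat u (by
      intro k
      fin_cases k
      · exact mem_spanF.2 ⟨w0, by rw [← hu0, hu]; rfl⟩
      · exact mem_spanF.2 ⟨w1, by rw [← hu1, hu1']; rfl⟩
      · exact mem_spanF.2 ⟨w2, by rw [← hu2, hu2']; rfl⟩))
    have hn0 : w0 - (X 0 : MvPolynomial (Fin 3) K) • w ∈ LinearMap.range Φ := by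
      rw [hrange, mem_Syz]
      simp only [Pi.sub_apply, Pi.smul_apply, smul_eq_mul]
      linear_combination hu - hu0 - X 0 * hw
    have hn1 : w1 - (X 1 : MvPolynomial (Fin 3) K) • w ∈ LinearMap.range Φ := by
      rw [hrange, mem_Syz]
      simp only [Pi.sub_apply, Pi.smul_apply, smul_eq_mul]
      linear_combination hu1' - hu1 - X 1 * hw
    have hn2 : w2 - (X 2 : MvPolynomial (Fin 3) K) • w ∈ LinearMap.range Φ := by
      rw [hrange, mem_Syz]
      simp only [Pi.sub_apply, Pi.smul_apply, smul_eq_mul]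
      linear_combination hu2' - hu2 - X 2 * hw
    obtain ⟨q0, hq0⟩ := hn0
    obtain ⟨q1, hq1⟩ := hn1
    obtain ⟨q2, hq2⟩ := hn2
    have hpQ' : p = (X 0 : MvPolynomial (Fin 3) K) •
          (Q 0 - ((X 1 : MvPolynomial (Fin 3) K) • q2 - (X 2 : MvPolynomial (Fin 3) K) • q1)) +
        (X 1 : MvPolynomial (Fin 3) K) •
          (Q 1 - ((X 2 : MvPolynomial (Fin 3) K) • q0 - (X 0 : MvPolynomial (Fin 3) K) • q2)) +
        (X 2 : MvPolynomial (Fin 3) K) •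
          (Q 2 - ((X 0 : MvPolynomial (Fin 3) K) • q1 - (X 1 : MvPolynomial (Fin 3) K) • q0)) := by
      rw [hpQ]; module
    rw [hpQ']
    refine Submodule.add_mem _ (Submodule.add_mem _ ?_ ?_) ?_ <;>
    refine Submodule.smul_mem_smul (Ideal.subset_span ⟨_, rfl⟩) ?_ <;>
    rw [LinearMap.mem_ker] <;>
    simp only [map_sub, map_smul, hq0, hq1, hq2] <;>
    ext1 k <;>
    simp only [Pi.sub_apply, Pi.smul_apply, smul_eq_mul, hw0, hw1, hw2, Pi.zero_apply] <;>
    ring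
  obtain ⟨r, hr, hr0⟩ := Submodule.exists_sub_one_mem_and_smul_eq_zero_of_fg_of_le_smul _ _
    (IsNoetherian.noetherian (LinearMap.ker Φ)) hR
  have hrne : r ≠ 0 := by
    rintro rfl
    have := coeff_zero_of_mem_m hr
    simp at this
  rw [Fintype.linearIndependent_iff]
  intro p hp i
  have := hr0 p (by rw [LinearMap.mem_ker, hΦ]; exact hp)
  have := congrFun this i
  simpa [hrne] using this

lemma gens_of_sat {F : Fin 3 → MvPolynomial (Fin 3) K} {e : ℕ}
    (hF : ∀ k, (F k).IsHomogeneous e) (hF0 : F 0 ≠ 0)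
    (hsat : ∀ u : MvPolynomial (Fin 3) K, (∀ k, X k * u ∈ Ideal.span (Set.range F)) →
      u ∈ Ideal.span (Set.range F)) :
    ∃ (σ τ : Fin 3 → MvPolynomial (Fin 3) K) (s t : ℕ), (∀ k, (σ k).IsHomogeneous s) ∧
      (∀ k, (τ k).IsHomogeneous t) ∧ Syz F = Submodule.span _ {σ, τ} := by
  classical
  obtain ⟨T, h1, h2, h3⟩ := exists_min_gens hF
  have hind := indep_of_sat T h2 h3 hsat
  have hcard : T.card ≤ 2 := by
    have hrk := Submodule.finrank_quotient_add_finrank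
      (LinearMap.ker (Fintype.linearCombination (MvPolynomial (Fin 3) K) F))
    rw [(LinearMap.quotKerEquivRange _).finrank_eq] at hrk
    have hpos : 0 < Module.finrank (MvPolynomial (Fin 3) K)
        (LinearMap.range (Fintype.linearCombination (MvPolynomial (Fin 3) K) F)) := by
      rw [Module.finrank_pos_iff_exists_ne_zero]
      refine ⟨⟨F 0, ?_⟩, fun h => hF0 (congrArg Subtype.val h)⟩
      rw [Fintype.range_linearCombination]
      exact Submodule.subset_span ⟨0, rfl⟩
    have hT : LinearIndependent (MvPolynomial (Fin 3) K) (fun i : T =>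
        (⟨i, by
          have : (i : Fin 3 → MvPolynomial (Fin 3) K) ∈ Syz F := h2 ▸ Submodule.subset_span i.2
          exact this⟩ :
        LinearMap.ker (Fintype.linearCombination (MvPolynomial (Fin 3) K) F))) :=
      LinearIndependent.of_comp (Submodule.subtype _) hind
    have hle := hT.fintype_card_le_finrank
    simp at hrk hle
    omega
  have hz : ∀ k : Fin 3, ((0 : Fin 3 → MvPolynomial (Fin 3) K) k).IsHomogeneous 0 :=
    fun k => isHomogeneous_zero _ _ _
  rcases (by omega : T.card = 0 ∨ T.card = 1 ∨ T.card = 2) with h | h | h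
  · rw [Finset.card_eq_zero] at h
    refine ⟨0, 0, 0, 0, hz, hz, ?_⟩
    rw [← h2, h]; simp
  · obtain ⟨σ, rfl⟩ := Finset.card_eq_one.1 h
    obtain ⟨s, hs⟩ := h1 σ (by simp)
    refine ⟨0, σ, 0, s, hz, hs, ?_⟩
    rw [← h2]; simp
  · obtain ⟨σ, τ, -, rfl⟩ := Finset.card_eq_two.1 h
    obtain ⟨s, hs⟩ := h1 σ (by simp)
    obtain ⟨t, ht⟩ := h1 τ (by simp)
    refine ⟨σ, τ, s, t, hs, ht, ?_⟩
    rw [← h2]; simp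

lemma cross_eq {F : Fin 3 → MvPolynomial (Fin 3) K} {y0 y1 y2 G : MvPolynomial (Fin 3) K}
    (hG : y0 * F 0 + y1 * F 1 + y2 * F 2 = G) (hrel : IsRelPrime G (F 0)) (hF0 : F 0 ≠ 0)
    {σ τ : Fin 3 → MvPolynomial (Fin 3) K} (hσ : σ ∈ Syz F) (hτ : τ ∈ Syz F) :
    ∃ c, σ 1 * τ 2 - σ 2 * τ 1 = c * F 0 ∧ σ 2 * τ 0 - σ 0 * τ 2 = c * F 1 ∧
      σ 0 * τ 1 - σ 1 * τ 0 = c * F 2 := by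
  rw [mem_Syz] at hσ hτ
  have h1 : (σ 1 * τ 2 - σ 2 * τ 1) * F 1 = (σ 2 * τ 0 - σ 0 * τ 2) * F 0 := by
    linear_combination -σ 2 * hτ + τ 2 * hσ
  have h2 : (σ 1 * τ 2 - σ 2 * τ 1) * F 2 = (σ 0 * τ 1 - σ 1 * τ 0) * F 0 := by
    linear_combination σ 1 * hτ - τ 1 * hσ
  have hd : F 0 ∣ G * (σ 1 * τ 2 - σ 2 * τ 1) :=
    ⟨y0 * (σ 1 * τ 2 - σ 2 * τ 1) + y1 * (σ 2 * τ 0 - σ 0 * τ 2) + y2 * (σ 0 * τ 1 - σ 1 * τ 0), by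
      rw [← hG]
      linear_combination y1 * h1 + y2 * h2⟩
  obtain ⟨c, hc⟩ := hrel.symm.dvd_of_dvd_mul_left hd
  refine ⟨c, by rw [hc]; ring, ?_, ?_⟩
  · apply mul_left_cancel₀ hF0
    rw [hc] at h1
    linear_combination -h1
  · apply mul_left_cancel₀ hF0
    rw [hc] at h2
    linear_combination -h2

lemma img_phi {F : Fin 3 → MvPolynomial (Fin 3) K} {y0 y1 y2 G : MvPolynomial (Fin 3) K}
    (hG : y0 * F 0 + y1 * F 1 + y2 * F 2 = G) (hrel : IsRelPrime G (F 0)) (hF0 : F 0 ≠ 0)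
    (hy : IsRelPrime y1 y2) (hy2 : y2 ≠ 0)
    (hPI : ∀ t, t * F 0 ∈ Ideal.span {y1, y2} → t ∈ Ideal.span {y1, y2})
    (g : MvPolynomial (Fin 3) K) :
    g ∈ (Ideal.span {G, F 0}).colon (Ideal.span (Set.range F) : Ideal (MvPolynomial (Fin 3) K)) ⊓
      Ideal.span {y1, y2} ↔ ∃ σ ∈ Syz F, y2 * σ 1 - y1 * σ 2 = g := by
  have hcol : g ∈ (Ideal.span {G, F 0}).colon
      (Ideal.span (Set.range F) : Ideal (MvPolynomial (Fin 3) K)) ↔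
      ∀ k, g * F k ∈ Ideal.span {G, F 0} := by
    rw [Ideal.colon_span, Submodule.mem_colon]
    simp
  rw [Submodule.mem_inf, hcol]
  constructor
  · rintro ⟨h, hg⟩
    obtain ⟨β1, α1, h1⟩ := Ideal.mem_span_pair.1 (h 1)
    obtain ⟨β2, α2, h2⟩ := Ideal.mem_span_pair.1 (h 2)
    -- pass to m = G - y0 F0
    have hrel' : IsRelPrime (y1 * F 1 + y2 * F 2) (F 0) := by
      intro d hd1 hd2
      refine hrel ?_ hd2
      rw [← hG, add_assoc]
      exact dvd_add (Dvd.dvd.mul_left hd2 _) hd1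
    set m := y1 * F 1 + y2 * F 2 with hm
    have h1' : β1 * m + (α1 + β1 * y0) * F 0 = g * F 1 := by
      rw [← h1, ← hG, hm]; ring
    have h2' : β2 * m + (α2 + β2 * y0) * F 0 = g * F 2 := by
      rw [← h2, ← hG, hm]; ring
    obtain ⟨a1, ha1⟩ : ∃ a1, a1 = α1 + β1 * y0 := ⟨_, rfl⟩
    obtain ⟨a2, ha2⟩ : ∃ a2, a2 = α2 + β2 * y0 := ⟨_, rfl⟩
    rw [← ha1] at h1'
    rw [← ha2] at h2'
    have hsum : m * (g - y1 * β1 - y2 * β2) + F 0 * (-(y1 * a1 + y2 * a2)) = 0 := by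
      rw [hm] at *
      linear_combination -y1 * h1' - y2 * h2'
    obtain ⟨t, ht, ht'⟩ := koszul2 hrel' hF0 hsum
    have htm : t ∈ Ideal.span {y1, y2} := by
      apply hPI
      have : t * F 0 = g - (β1 * y1 + β2 * y2) := by linear_combination -ht
      rw [this]
      exact Ideal.sub_mem _ hg (Ideal.mem_span_pair.2 ⟨_, _, rfl⟩)
    obtain ⟨t1, t2, htt⟩ := Ideal.mem_span_pair.1 htm
    obtain ⟨s, hs, hs'⟩ := koszul2 hy hy2 (s := a1 - t1 * m) (t := a2 - t2 * m) (by
      rw [← htt] at ht'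
      linear_combination -ht')
    refine ⟨![-s, β2 + t2 * F 0, -(β1 + t1 * F 0)], ?_, ?_⟩
    · rw [mem_Syz]
      simp only [Matrix.cons_val]
      apply mul_left_cancel₀ hy2
      rw [mul_zero]
      rw [← htt] at ht
      rw [hm] at *
      linear_combination -h1' - F 1 * ht + F 0 * hs
    · simp only [Matrix.cons_val]
      rw [← htt] at ht
      linear_combination -ht
  · rintro ⟨σ, hσ, rfl⟩
    rw [mem_Syz] at hσ
    refine ⟨fun k => ?_, Ideal.mem_span_pair.2 ⟨-σ 2, σ 1, by ring⟩⟩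
    rw [Ideal.mem_span_pair]
    fin_cases k
    · exact ⟨0, y2 * σ 1 - y1 * σ 2, by simp⟩
    · refine ⟨-σ 2, -y2 * σ 0 + σ 2 * y0, ?_⟩
      simp only [Fin.mk_one]
      rw [← hG]
      linear_combination -y2 * hσ
    · refine ⟨σ 1, y1 * σ 0 - σ 1 * y0, ?_⟩
      simp only [Fin.reduceFinMk]
      rw [← hG]
      linear_combination y1 * hσ

lemma core_mp {F : Fin 3 → MvPolynomial (Fin 3) K} {y0 y1 y2 G : MvPolynomial (Fin 3) K} {e : ℕ}
    (hF : ∀ k, (F k).IsHomogeneous e)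
    (hy1h : y1.IsHomogeneous 1) (hy2h : y2.IsHomogeneous 1)
    (hG : y0 * F 0 + y1 * F 1 + y2 * F 2 = G) (hrel : IsRelPrime G (F 0)) (hF0 : F 0 ≠ 0)
    (hy : IsRelPrime y1 y2) (hy2 : y2 ≠ 0)
    (hPI : ∀ t, t * F 0 ∈ Ideal.span {y1, y2} → t ∈ Ideal.span {y1, y2})
    (hnc : ∀ c : Fin 3 → K, C (c 0) * F 0 + C (c 1) * F 1 + C (c 2) * F 2 = 0 → c = 0)
    (hsat : ∀ u : MvPolynomial (Fin 3) K, (∀ k, X k * u ∈ Ideal.span (Set.range F)) →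
      u ∈ Ideal.span (Set.range F)) :
    ∃ (g h : MvPolynomial (Fin 3) K) (e₁ e₂ : ℕ),
          g.IsHomogeneous e₁ ∧ h.IsHomogeneous e₂ ∧
          e₁ + e₂ = e + 2 ∧ 2 ≤ e₁ ∧ 2 ≤ e₂ ∧
          (Ideal.span {G, F 0}).colon
            (Ideal.span (Set.range F) : Ideal (MvPolynomial (Fin 3) K)) ⊓
            Ideal.span {y1, y2} = Ideal.span {g, h} := by
  obtain ⟨σ, τ, s, t, hs, ht, hspan⟩ := gens_of_sat hF hF0 hsat
  have hσ : σ ∈ Syz F := hspan ▸ Submodule.subset_span (by simp)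
  have hτ : τ ∈ Syz F := hspan ▸ Submodule.subset_span (by simp)
  obtain ⟨c, hc0, hc1, hc2⟩ := cross_eq hG hrel hF0 hσ hτ
  have hcd : ∀ ω₁ ∈ Syz F, ∀ ω₂ ∈ Syz F, ∀ D, ω₁ 1 * ω₂ 2 - ω₁ 2 * ω₂ 1 = F 0 * D → c ∣ D := by
    intro ω₁ h1 ω₂ h2 D hD
    rw [hspan, Submodule.mem_span_pair] at h1 h2
    obtain ⟨a, b, rfl⟩ := h1
    obtain ⟨a', b', rfl⟩ := h2
    refine ⟨a * b' - a' * b, ?_⟩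
    apply mul_left_cancel₀ hF0
    rw [← hD]
    simp only [Pi.add_apply, Pi.smul_apply, smul_eq_mul]
    linear_combination (a * b' - a' * b) * hc0
  have hk1 : ![F 1, -F 0, 0] ∈ Syz F := by
    rw [mem_Syz]; simp only [Matrix.cons_val]; ring
  have hk2 : ![F 2, 0, -F 0] ∈ Syz F := by
    rw [mem_Syz]; simp only [Matrix.cons_val]; ring
  have hk3 : ![0, F 2, -F 1] ∈ Syz F := by
    rw [mem_Syz]; simp only [Matrix.cons_val]; ring
  have hd0 : c ∣ F 0 := hcd _ hk1 _ hk2 _ (by simp only [Matrix.cons_val]; ring)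
  have hd1 : c ∣ F 1 := hcd _ hk1 _ hk3 _ (by simp only [Matrix.cons_val]; ring)
  have hd2 : c ∣ F 2 := hcd _ hk2 _ hk3 _ (by simp only [Matrix.cons_val]; ring)
  have hcu : IsUnit c := by
    refine hrel ?_ hd0
    rw [← hG]
    exact dvd_add (dvd_add (hd0.mul_left _) (hd1.mul_left _)) (hd2.mul_left _)
  have hc_ne : c * F 0 ≠ 0 := mul_ne_zero hcu.ne_zero hF0
  have hst : s + t = e := by
    have hA : (c * F 0).IsHomogeneous (s + t) := by
      rw [← hc0]
      exact ((hs 1).mul (ht 2)).sub ((hs 2).mul (ht 1))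
    have hB : (c * F 0).IsHomogeneous (0 + e) := by
      refine IsHomogeneous.mul ?_ (hF 0)
      rw [← totalDegree_zero_iff_isHomogeneous]
      exact (MvPolynomial.isUnit_iff_totalDegree_of_isReduced.1 hcu).2
    have := hA.inj_right hB hc_ne
    omega
  have hconst : ∀ v ∈ Syz F, (∀ k, (v k).IsHomogeneous 0) → v = 0 := by
    intro v hv hv0
    have hvc : ∀ k, v k = C (coeff 0 (v k)) := fun k => by
      rw [← totalDegree_eq_zero_iff_eq_C, totalDegree_zero_iff_isHomogeneous]
      exact hv0 k
    rw [mem_Syz, hvc 0, hvc 1, hvc 2] at hv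
    have := hnc (fun k => coeff 0 (v k)) hv
    ext1 k
    rw [hvc k, congrFun this k]
    simp
  have hs1 : s ≠ 0 := by
    rintro rfl
    have := hconst σ hσ hs
    rw [this] at hc0
    exact hc_ne (by rw [← hc0]; simp)
  have ht1 : t ≠ 0 := by
    rintro rfl
    have := hconst τ hτ ht
    rw [this] at hc0
    exact hc_ne (by rw [← hc0]; simp)
  refine ⟨y2 * σ 1 - y1 * σ 2, y2 * τ 1 - y1 * τ 2, 1 + s, 1 + t, ?_, ?_, by omega, by omega,
    by omega, ?_⟩
  · exact (hy2h.mul (hs 1)).sub (hy1h.mul (hs 2))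
  · exact (hy2h.mul (ht 1)).sub (hy1h.mul (ht 2))
  · ext g
    rw [img_phi hG hrel hF0 hy hy2 hPI, Ideal.mem_span_pair]
    constructor
    · rintro ⟨v, hv, rfl⟩
      rw [hspan, Submodule.mem_span_pair] at hv
      obtain ⟨a, b, rfl⟩ := hv
      refine ⟨a, b, ?_⟩
      simp only [Pi.add_apply, Pi.smul_apply, smul_eq_mul]
      ring
    · rintro ⟨a, b, rfl⟩
      refine ⟨a • σ + b • τ, Submodule.add_mem _ (Submodule.smul_mem _ _ hσ)
        (Submodule.smul_mem _ _ hτ), ?_⟩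
      simp only [Pi.add_apply, Pi.smul_apply, smul_eq_mul]
      ring

lemma lift_homog {F : Fin 3 → MvPolynomial (Fin 3) K} {y1 y2 g : MvPolynomial (Fin 3) K} {e n : ℕ}
    (hF : ∀ k, (F k).IsHomogeneous e)
    (hy1h : y1.IsHomogeneous 1) (hy2h : y2.IsHomogeneous 1) (hg : g.IsHomogeneous (n + 1))
    (h : ∃ σ ∈ Syz F, y2 * σ 1 - y1 * σ 2 = g) :
    ∃ σ ∈ Syz F, (∀ k, (σ k).IsHomogeneous n) ∧ y2 * σ 1 - y1 * σ 2 = g := by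
  obtain ⟨σ, hσ, rfl⟩ := h
  refine ⟨_, hcv_mem hF hσ n, fun k => homogeneousComponent_isHomogeneous _ _, ?_⟩
  have := homogeneousComponent_eq_self hg
  rw [map_sub, mul_comm y2, mul_comm y1, hc_mul _ _ _ _ hy1h, hc_mul _ _ _ _ hy2h] at this
  linear_combination this

lemma core_mpr {F : Fin 3 → MvPolynomial (Fin 3) K} {y0 y1 y2 G : MvPolynomial (Fin 3) K} {e : ℕ}
    (hF : ∀ k, (F k).IsHomogeneous e)
    (hy1h : y1.IsHomogeneous 1) (hy2h : y2.IsHomogeneous 1)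
    (hG : y0 * F 0 + y1 * F 1 + y2 * F 2 = G) (hrel : IsRelPrime G (F 0)) (hF0 : F 0 ≠ 0)
    (hy : IsRelPrime y1 y2) (hy2 : y2 ≠ 0)
    (hPI : ∀ t, t * F 0 ∈ Ideal.span {y1, y2} → t ∈ Ideal.span {y1, y2})
    (hPI1 : (1 : MvPolynomial (Fin 3) K) ∉ Ideal.span {y1, y2})
    (hex : ∃ (g h : MvPolynomial (Fin 3) K) (e₁ e₂ : ℕ),
          g.IsHomogeneous e₁ ∧ h.IsHomogeneous e₂ ∧
          e₁ + e₂ = e + 2 ∧ 2 ≤ e₁ ∧ 2 ≤ e₂ ∧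
          (Ideal.span {G, F 0}).colon
            (Ideal.span (Set.range F) : Ideal (MvPolynomial (Fin 3) K)) ⊓
            Ideal.span {y1, y2} = Ideal.span {g, h})
    (u : MvPolynomial (Fin 3) K) (hu : ∀ k, X k * u ∈ Ideal.span (Set.range F)) :
      u ∈ Ideal.span (Set.range F) := by
  obtain ⟨g, h, e₁, e₂, hg, hh, hsum, he1, he2, hI⟩ := hex
  obtain ⟨n, rfl⟩ : ∃ n, e₁ = n + 1 := ⟨e₁ - 1, by omega⟩
  obtain ⟨m, rfl⟩ : ∃ n, e₂ = n + 1 := ⟨e₂ - 1, by omega⟩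
  have himg := img_phi hG hrel hF0 hy hy2 hPI
  obtain ⟨σ, hσ, hσh, hσg⟩ := lift_homog hF hy1h hy2h hg
    ((himg g).1 (hI ▸ Ideal.subset_span (by simp)))
  obtain ⟨τ, hτ, hτh, hτg⟩ := lift_homog hF hy1h hy2h hh
    ((himg h).1 (hI ▸ Ideal.subset_span (by simp)))
  have hrelgh : IsRelPrime g h := by
    intro q hqg hqh
    have hq : ∀ z ∈ Ideal.span {g, h}, q ∣ z := by
      intro z hz
      obtain ⟨a, b, rfl⟩ := Ideal.mem_span_pair.1 hz
      exact dvd_add (hqg.mul_left _) (hqh.mul_left _)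
    have hq' : ∀ y ∈ Ideal.span {y1, y2}, ∀ z ∈ Ideal.span {G, F 0}, q ∣ y * z := by
      intro y hy z hz
      apply hq
      rw [← hI]
      refine ⟨?_, Ideal.mul_mem_right _ _ hy⟩
      apply Ideal.le_colon
      exact Ideal.mul_mem_left _ _ hz
    have m1 : y1 ∈ Ideal.span {y1, y2} := Ideal.subset_span (by simp)
    have m2 : y2 ∈ Ideal.span {y1, y2} := Ideal.subset_span (by simp)
    have n1 : G ∈ Ideal.span {G, F 0} := Ideal.subset_span (by simp)
    have n2 : F 0 ∈ Ideal.span {G, F 0} := Ideal.subset_span (by simp)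
    by_contra hqu
    have hq0 : q ≠ 0 := by
      rintro rfl
      exact mul_ne_zero hy2 hF0 (zero_dvd_iff.1 (hq' _ m2 _ n2))
    obtain ⟨p, hp, hpq⟩ := WfDvdMonoid.exists_irreducible_factor hqu hq0
    have hpp := hp.prime
    have hstep : ∀ z ∈ Ideal.span {G, F 0}, p ∣ z := by
      intro z hz
      rcases hpp.dvd_or_dvd (hpq.trans (hq' _ m1 _ hz)) with h1 | h1
      · rcases hpp.dvd_or_dvd (hpq.trans (hq' _ m2 _ hz)) with h2 | h2
        · exact absurd (hy h1 h2) hp.not_isUnit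
        · exact h2
      · exact h1
    exact hp.not_isUnit (hrel (hstep _ n1) (hstep _ n2))
  obtain ⟨c, hc0, hc1, hc2⟩ := cross_eq hG hrel hF0 hσ hτ
  have hcne : c ≠ 0 := by
    rintro rfl
    have k1 : g * τ 1 = h * σ 1 := by
      rw [← hσg, ← hτg]; linear_combination y1 * hc0
    have k2 : g * τ 2 = h * σ 2 := by
      rw [← hσg, ← hτg]; linear_combination y2 * hc0
    obtain ⟨a, ha⟩ := hrelgh.dvd_of_dvd_mul_left (⟨_, k1.symm⟩ : g ∣ h * σ 1)
    obtain ⟨b, hb⟩ := hrelgh.dvd_of_dvd_mul_left (⟨_, k2.symm⟩ : g ∣ h * σ 2)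
    by_cases hg0 : g = 0
    · rw [hg0, isRelPrime_zero_left] at hrelgh
      have hhm : h ∈ Ideal.span {y1, y2} := by
        rw [← hτg]; exact Ideal.mem_span_pair.2 ⟨-τ 2, τ 1, by ring⟩
      exact hPI1 (Ideal.eq_top_of_isUnit_mem _ hhm hrelgh ▸ Submodule.mem_top)
    · apply hPI1
      have : (1 : MvPolynomial (Fin 3) K) = -b * y1 + a * y2 := by
        apply mul_left_cancel₀ hg0
        rw [ha, hb] at hσg
        linear_combination -hσg
      rw [this]
      exact Ideal.mem_span_pair.2 ⟨_, _, rfl⟩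
  have hcC : ∃ c' : K, c' ≠ 0 ∧ c = C c' := by
    have hA : (c * F 0).IsHomogeneous (n + m) := by
      rw [← hc0]
      exact ((hσh 1).mul (hτh 2)).sub ((hσh 2).mul (hτh 1))
    have h1 := hA.totalDegree (mul_ne_zero hcne hF0)
    rw [totalDegree_mul_of_isDomain hcne hF0, (hF 0).totalDegree hF0] at h1
    have h2 : c.totalDegree = 0 := by omega
    rw [totalDegree_eq_zero_iff_eq_C] at h2
    refine ⟨_, ?_, h2⟩
    intro h3
    rw [h3] at h2
    exact hcne (by rw [h2]; simp)
  obtain ⟨c', hc', rfl⟩ := hcC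
  refine sat_of_free F σ τ ?_ ?_ u hu
  · apply le_antisymm
    · intro ω hω
      obtain ⟨α, ha0, ha1, ha2⟩ := cross_eq hG hrel hF0 hτ hω
      obtain ⟨β, hb0, hb1, hb2⟩ := cross_eq hG hrel hF0 hω hσ
      have hω' := mem_Syz.1 hω
      rw [Submodule.mem_span_pair]
      have hkey : ∀ k, C c' * ω k + α * σ k + β * τ k = 0 := by
        intro k
        apply mul_left_cancel₀ hF0
        rw [mul_zero]
        fin_cases k
        · simp only [Fin.zero_eta]
          linear_combination -hc0 * ω 0 - ha0 * σ 0 - hb0 * τ 0 + hc0 * ω 0 + hc1 * ω 1 + hc2 * ω 2 + C c' * hω'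
        · simp only [Fin.mk_one]
          linear_combination -hc0 * ω 1 - ha0 * σ 1 - hb0 * τ 1
        · simp only [Fin.reduceFinMk]
          linear_combination -hc0 * ω 2 - ha0 * σ 2 - hb0 * τ 2
      have hinv : (C c'⁻¹ : MvPolynomial (Fin 3) K) * C c' = 1 := by
        rw [← C_mul, inv_mul_cancel₀ hc', C_1]
      refine ⟨-C c'⁻¹ * α, -C c'⁻¹ * β, ?_⟩
      ext1 k
      simp only [Pi.add_apply, Pi.smul_apply, smul_eq_mul]
      linear_combination -C c'⁻¹ * hkey k + ω k * hinv
    · rw [Submodule.span_le]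
      rintro v (rfl | rfl)
      · exact hσ
      · exact hτ
  · intro p q hpq
    have h1 := congrFun hpq 1
    have h2 := congrFun hpq 2
    simp only [Pi.add_apply, Pi.smul_apply, smul_eq_mul, Pi.zero_apply] at h1 h2
    have hne := mul_ne_zero hcne hF0
    constructor
    · apply mul_right_cancel₀ hne
      rw [zero_mul, ← hc0]
      linear_combination τ 2 * h1 - τ 1 * h2
    · apply mul_right_cancel₀ hne
      rw [zero_mul, ← hc0]
      linear_combination -σ 2 * h1 + σ 1 * h2


lemma lin_form {h : MvPolynomial (Fin 3) K} (hh : h.IsHomogeneous 1) :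
    ∃ c : Fin 3 → K, h = ∑ l, C (c l) * X l := by
  rw [← mem_homogeneousSubmodule, homogeneousSubmodule_one_eq_span_X,
    Submodule.mem_span_range_iff_exists_fun] at hh
  obtain ⟨c, hc⟩ := hh
  exact ⟨c, by rw [← hc]; simp [smul_eq_C_mul]⟩

lemma lin_irred {h : MvPolynomial (Fin 3) K} (hh : h.IsHomogeneous 1) (h0 : h ≠ 0) :
    Irreducible h := by
  apply irreducible_of_totalDegree_eq_one (hh.totalDegree h0)
  intro x hx
  obtain ⟨m, hm⟩ := MvPolynomial.exists_coeff_ne_zero h0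
  rw [isUnit_iff_ne_zero]
  rintro rfl
  exact hm (zero_dvd_iff.1 (hx m))

lemma lderiv_mul (q : Fin 3 → K) (f g : MvPolynomial (Fin 3) K) :
    lderiv q (f * g) = f * lderiv q g + g * lderiv q f := by
  simp only [lderiv, Fin.sum_univ_three, Derivation.leibniz, smul_eq_C_mul, smul_eq_mul]
  ring

lemma lderiv_lin (q : Fin 3 → K) {h : MvPolynomial (Fin 3) K} (hh : h.IsHomogeneous 1) :
    lderiv q h = C (eval q h) := by
  obtain ⟨c, rfl⟩ := lin_form hh
  simp [lderiv, Fin.sum_univ_three, smul_eq_C_mul, pderiv_X, Pi.single_apply]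
  ring

lemma eval_zero_of_dvd {d : ℕ} (L : Fin d → MvPolynomial (Fin 3) K)
    (hhom : ∀ i, (L i).IsHomogeneous 1) (hne : ∀ i, L i ≠ 0)
    (hprop : ∀ i j, i ≠ j → ∀ c : K, L i ≠ c • L j) (q : Fin 3 → K) (l : Fin d)
    (h : L l ∣ lderiv q (∏ i, L i)) : eval q (L l) = 0 := by
  have hp : Prime (L l) := (lin_irred (hhom l) (hne l)).prime
  by_contra hc
  rw [← Finset.mul_prod_erase _ _ (Finset.mem_univ l), lderiv_mul, lderiv_lin _ (hhom l),
    dvd_add_right (Dvd.intro _ rfl)] at h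
  rcases hp.dvd_or_dvd h with h | h
  · rw [hp.dvd_finsetProd_iff] at h
    obtain ⟨m, hm, hd⟩ := h
    obtain ⟨r, hr⟩ := hd
    have hml : m ≠ l := (Finset.mem_erase.1 hm).1
    have hr0 : r ≠ 0 := by
      rintro rfl
      exact hne m (by rw [hr, mul_zero])
    have hdeg := (hhom m).totalDegree (hne m)
    rw [hr, totalDegree_mul_of_isDomain (hne l) hr0, (hhom l).totalDegree (hne l)] at hdeg
    have h2 : r.totalDegree = 0 := by omega
    rw [totalDegree_eq_zero_iff_eq_C] at h2
    apply hprop m l hml (coeff 0 r)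
    rw [smul_eq_C_mul, ← h2, hr, mul_comm]
  · apply hp.not_isUnit
    refine isUnit_of_dvd_unit h ?_
    exact (isUnit_iff_ne_zero.2 hc).map C

lemma sat_iff (J : Ideal (MvPolynomial (Fin 3) K)) :
    J.colon (Ideal.span (Set.range X) : Ideal (MvPolynomial (Fin 3) K)) = J ↔
      ∀ u : MvPolynomial (Fin 3) K, (∀ k, X k * u ∈ J) → u ∈ J := by
  have hmem : ∀ u, u ∈ J.colon (Ideal.span (Set.range X) : Ideal (MvPolynomial (Fin 3) K)) ↔
      ∀ k, X k * u ∈ J := by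
    intro u
    rw [Ideal.colon_span, Submodule.mem_colon]
    simp [mul_comm]
  constructor
  · intro h u hu
    rw [← h]
    exact (hmem u).2 hu
  · intro h
    apply le_antisymm
    · intro u hu
      exact h u ((hmem u).1 hu)
    · exact Ideal.le_colon

lemma main_aux [CharZero K] {d : ℕ} (hd : 3 ≤ d)
    (L : Fin d → MvPolynomial (Fin 3) K)
    (hhom : ∀ i, (L i).IsHomogeneous 1) (hne : ∀ i, L i ≠ 0)
    (hprop : ∀ i j, i ≠ j → ∀ c : K, L i ≠ c • L j)
    (hnotconc : ¬ ∃ q : Fin 3 → K, q ≠ 0 ∧ ∀ i, eval q (L i) = 0)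
    (a : Fin 3 → K) (ha : eval a (∏ i, L i) ≠ 0)
    (i j k : Fin 3) (hij : i ≠ j) (hik : i ≠ k) (hjk : j ≠ k) (hai : a i ≠ 0)
    (hall : ∀ l, l = i ∨ l = j ∨ l = k)
    (hsum : ∀ g : Fin 3 → MvPolynomial (Fin 3) K, ∑ l, g l = g i + g j + g k) :
    ((jacobianIdeal (∏ i, L i)).colon
            (Ideal.span (Set.range X) : Ideal (MvPolynomial (Fin 3) K)) =
          jacobianIdeal (∏ i, L i) ↔
        ∃ (g h : MvPolynomial (Fin 3) K) (e₁ e₂ : ℕ),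
          g.IsHomogeneous e₁ ∧ h.IsHomogeneous e₂ ∧
          e₁ + e₂ = d + 1 ∧ 2 ≤ e₁ ∧ 2 ≤ e₂ ∧
          genResidual a (∏ i, L i) ⊓ pointIdeal a = Ideal.span {g, h}) := by
  have hfh : (∏ i, L i).IsHomogeneous d := by
    have := IsHomogeneous.prod Finset.univ L (fun _ => 1) (fun i _ => hhom i)
    simpa using this
  have hdvd : ∀ q, ∀ l, L l ∣ lderiv q (∏ i, L i) → eval q (L l) = 0 := fun q l h =>
    eval_zero_of_dvd L hhom hne hprop q l h
  have hrel0 : IsRelPrime (∏ i, L i) (lderiv a (∏ i, L i)) := by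
    apply IsRelPrime.prod_left
    intro l _
    rw [(lin_irred (hhom l) (hne l)).isRelPrime_iff_not_dvd]
    intro h
    apply ha
    rw [map_prod]
    exact Finset.prod_eq_zero (Finset.mem_univ l) (hdvd a l h)
  have hzero : ∀ q, lderiv q (∏ i, L i) = 0 → q = 0 := by
    intro q hq
    by_contra hq0
    exact hnotconc ⟨q, hq0, fun l => hdvd q l (by rw [hq]; exact dvd_zero _)⟩
  generalize (∏ i, L i) = f at *
  clear hdvd hprop hne hhom hnotconc
  have heuler : X i * pderiv i f + X j * pderiv j f + X k * pderiv k f = C (d : K) * f := by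
    rw [← hsum (fun l => X l * pderiv l f), hfh.sum_X_mul_pderiv, nsmul_eq_mul]
    simp
  have hld : ∀ q, lderiv q f = C (q i) * pderiv i f + C (q j) * pderiv j f + C (q k) * pderiv k f := by
    intro q
    rw [lderiv, hsum]
    simp only [smul_eq_C_mul]
  have hd0 : (d : K) ≠ 0 := by
    rw [Nat.cast_ne_zero]; omega
  have hCinv : (C (a i)⁻¹ : MvPolynomial (Fin 3) K) * C (a i) = 1 := by
    rw [← C_mul, inv_mul_cancel₀ hai, C_1]
  set F : Fin 3 → MvPolynomial (Fin 3) K := ![lderiv a f, pderiv j f, pderiv k f] with hFdef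
  have F0 : F 0 = lderiv a f := rfl
  have F1 : F 1 = pderiv j f := rfl
  have F2 : F 2 = pderiv k f := rfl
  set y0 : MvPolynomial (Fin 3) K := C (a i)⁻¹ * X i with hy0
  set y1 : MvPolynomial (Fin 3) K := X j - C (a j) * y0 with hy1
  set y2 : MvPolynomial (Fin 3) K := X k - C (a k) * y0 with hy2
  have hG : y0 * F 0 + y1 * F 1 + y2 * F 2 = C (d : K) * f := by
    rw [F0, F1, F2, hld, ← heuler, hy1, hy2, hy0]
    linear_combination X i * pderiv i f * hCinv
  have hy0h : y0.IsHomogeneous 1 := by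
    have := (isHomogeneous_C (Fin 3) (a i)⁻¹).mul (isHomogeneous_X K i)
    simpa using this
  have hy1h : y1.IsHomogeneous 1 := by
    refine (isHomogeneous_X K j).sub ?_
    have := (isHomogeneous_C (Fin 3) (a j)).mul hy0h
    simpa using this
  have hy2h : y2.IsHomogeneous 1 := by
    refine (isHomogeneous_X K k).sub ?_
    have := (isHomogeneous_C (Fin 3) (a k)).mul hy0h
    simpa using this
  have hy0a : eval a y0 = 1 := by simp [hy0, hai]
  have hy1a : eval a y1 = 0 := by simp [hy1, hy0a]
  have hy2a : eval a y2 = 0 := by simp [hy2, hy0a]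
  have hy1k : eval (Pi.single k 1) y1 = 0 := by simp [hy1, hy0, hik, hjk]
  have hy2k : eval (Pi.single k 1) y2 = 1 := by simp [hy2, hy0, hik]
  have hy1j : eval (Pi.single j 1) y1 = 1 := by simp [hy1, hy0, hij]
  have hy2ne : y2 ≠ 0 := by
    intro h; rw [h] at hy2k; simp at hy2k
  have hy1ne : y1 ≠ 0 := by
    intro h; rw [h] at hy1j; simp at hy1j
  have hy : IsRelPrime y1 y2 := by
    rw [(lin_irred hy1h hy1ne).isRelPrime_iff_not_dvd]
    rintro ⟨r, hr⟩
    rw [hr, map_mul, hy1k, zero_mul] at hy2k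
    exact zero_ne_one hy2k
  have hF0a : eval a (F 0) ≠ 0 := by
    have := congrArg (eval a) hG
    simp only [map_add, map_mul, hy0a, hy1a, hy2a, eval_C] at this
    rw [one_mul, zero_mul, zero_mul, add_zero, add_zero] at this
    rw [this]
    exact mul_ne_zero hd0 ha
  have hF0 : F 0 ≠ 0 := by
    intro h; rw [h] at hF0a; simp at hF0a
  have hdu : IsUnit (C (d : K) : MvPolynomial (Fin 3) K) := (isUnit_iff_ne_zero.2 hd0).map C
  have hrel : IsRelPrime (C (d : K) * f) (F 0) := by
    rw [F0]
    intro z hz1 hz2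
    exact hrel0 ((hdu.dvd_mul_left).1 hz1) hz2
  have hFh : ∀ l, (F l).IsHomogeneous (d - 1) := by
    have hp : ∀ l, (pderiv l f).IsHomogeneous (d - 1) := fun l => hfh.pderiv
    intro l
    fin_cases l
    · change (lderiv a f).IsHomogeneous (d - 1)
      rw [lderiv]
      refine IsHomogeneous.sum _ _ _ fun l _ => ?_
      rw [smul_eq_C_mul]
      have := (isHomogeneous_C (Fin 3) (a l)).mul (hp l)
      simpa using this
    · exact hp j
    · exact hp k
  -- ideals
  have hJ : jacobianIdeal f = Ideal.span (Set.range F) := by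
    apply le_antisymm
    · rw [jacobianIdeal, Ideal.span_le]
      rintro _ ⟨l, rfl⟩
      change pderiv l f ∈ Ideal.span (Set.range F)
      rw [mem_spanF]
      rcases hall l with rfl | rfl | rfl
      · refine ⟨![C (a l)⁻¹, -C (a l)⁻¹ * C (a j), -C (a l)⁻¹ * C (a k)], ?_⟩
        simp only [Matrix.cons_val]
        rw [F0, F1, F2, hld]
        linear_combination pderiv l f * hCinv
      · exact ⟨![0, 1, 0], by simp [F1]⟩
      · exact ⟨![0, 0, 1], by simp [F2]⟩
    · rw [Ideal.span_le]
      have hp : ∀ l, pderiv l f ∈ jacobianIdeal f := fun l => Ideal.subset_span ⟨l, rfl⟩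
      rintro _ ⟨l, rfl⟩
      fin_cases l
      · change lderiv a f ∈ jacobianIdeal f
        rw [hld]
        exact Ideal.add_mem _ (Ideal.add_mem _ (Ideal.mul_mem_left _ _ (hp _))
          (Ideal.mul_mem_left _ _ (hp _))) (Ideal.mul_mem_left _ _ (hp _))
      · exact hp j
      · exact hp k
  have hfG : Ideal.span {f, lderiv a f} = Ideal.span {C (d : K) * f, F 0} := by
    rw [F0, Ideal.span_insert, Ideal.span_insert, Ideal.span_singleton_mul_left_unit hdu]
  have hP : pointIdeal a = Ideal.span {y1, y2} := by
    apply le_antisymm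
    · rw [pointIdeal, Ideal.span_le]
      rintro h ⟨hh, hha⟩
      obtain ⟨c, rfl⟩ := lin_form hh
      change _ ∈ Ideal.span {y1, y2}
      rw [Ideal.mem_span_pair]
      refine ⟨C (c j), C (c k), ?_⟩
      rw [hsum] at hha ⊢
      simp only [map_add, map_mul, eval_C, eval_X] at hha
      have h3 := congrArg (C : K → MvPolynomial (Fin 3) K) hha
      simp only [C_add, C_mul, C_0] at h3
      rw [hy1, hy2, hy0]
      linear_combination -C (a i)⁻¹ * X i * h3 + C (c i) * X i * hCinv
    · rw [Ideal.span_le]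
      rintro _ (rfl | rfl)
      · exact Ideal.subset_span ⟨hy1h, hy1a⟩
      · exact Ideal.subset_span ⟨hy2h, hy2a⟩
  have hPI : ∀ t, t * F 0 ∈ Ideal.span {y1, y2} → t ∈ Ideal.span {y1, y2} := by
    intro t ht
    let ψ : MvPolynomial (Fin 3) K →ₐ[K] MvPolynomial (Fin 3) K := aeval fun l => C (a l) * y0
    have hψX : ∀ l, ψ (X l) = C (a l) * y0 := fun l => aeval_X _ _
    have hψC : ∀ c, ψ (C c) = C c := fun c => by
      rw [← algebraMap_eq]; exact ψ.commutes c
    have hψy0 : ψ y0 = y0 := by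
      rw [hy0, map_mul, hψX, hψC, hy0]
      linear_combination C (a i)⁻¹ * X i * hCinv
    have hψ1 : ψ y1 = 0 := by
      rw [hy1, map_sub, map_mul, hψX, hψC, hψy0, sub_self]
    have hψ2 : ψ y2 = 0 := by
      rw [hy2, map_sub, map_mul, hψX, hψC, hψy0, sub_self]
    have hev : ∀ p, eval a (ψ p) = eval a p := by
      intro p
      induction p using MvPolynomial.induction_on with
      | C c => rw [hψC]
      | add p q hp hq => rw [map_add, map_add, map_add, hp, hq]
      | mul_X p l hp => rw [map_mul, map_mul, map_mul, hp, hψX]; simp [hy0a]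
    have hsub : ∀ p, p - ψ p ∈ Ideal.span {y1, y2} := by
      intro p
      induction p using MvPolynomial.induction_on with
      | C c => rw [hψC, sub_self]; exact Ideal.zero_mem _
      | add p q hp hq =>
        rw [map_add, add_sub_add_comm]; exact Ideal.add_mem _ hp hq
      | mul_X p l hp =>
        have hX : X l - ψ (X l) ∈ Ideal.span {y1, y2} := by
          rw [hψX]
          rcases hall l with rfl | rfl | rfl
          · have : X l - C (a l) * y0 = 0 := by
              rw [hy0]; linear_combination -X l * hCinv
            rw [this]; exact Ideal.zero_mem _
          · exact Ideal.subset_span (by simp [hy1])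
          · exact Ideal.subset_span (by simp [hy2])
        have : p * X l - ψ (p * X l) = X l * (p - ψ p) + ψ p * (X l - ψ (X l)) := by
          rw [map_mul]; ring
        rw [this]
        exact Ideal.add_mem _ (Ideal.mul_mem_left _ _ hp) (Ideal.mul_mem_left _ _ hX)
    obtain ⟨u, v, huv⟩ := Ideal.mem_span_pair.1 ht
    have h4 := congrArg ψ huv
    rw [map_add, map_mul, map_mul, map_mul, hψ1, hψ2, mul_zero, mul_zero, add_zero] at h4
    have h5 : ψ (F 0) ≠ 0 := by
      intro h
      apply hF0a
      rw [← hev, h, map_zero]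
    have h6 : ψ t = 0 := by
      rcases mul_eq_zero.1 h4.symm with h | h
      · exact h
      · exact absurd h h5
    have := hsub t
    rwa [h6, sub_zero] at this
  have hPI1 : (1 : MvPolynomial (Fin 3) K) ∉ Ideal.span {y1, y2} := by
    intro h
    obtain ⟨u, v, huv⟩ := Ideal.mem_span_pair.1 h
    have := congrArg (eval a) huv
    simp [hy1a, hy2a] at this
  have hnc : ∀ c : Fin 3 → K, C (c 0) * F 0 + C (c 1) * F 1 + C (c 2) * F 2 = 0 → c = 0 := by
    intro c hc
    have hq := hzero (fun l => c 0 * a l + c 1 * (Pi.single j 1 : Fin 3 → K) l +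
      c 2 * (Pi.single k 1 : Fin 3 → K) l) (by
        rw [F0, F1, F2, hld] at hc
        rw [hld, ← hc]
        simp only [C_add, C_mul, Pi.single_eq_same, Pi.single_eq_of_ne hij, Pi.single_eq_of_ne hik,
          Pi.single_eq_of_ne hjk, Pi.single_eq_of_ne hjk.symm, C_0, C_1]
        ring)
    have qi := congrFun hq i
    have qj := congrFun hq j
    have qk := congrFun hq k
    simp [hij, hik, hai] at qi
    simp [hjk, qi] at qj
    simp [hjk.symm, qi] at qk
    ext l
    fin_cases l
    · exact qi
    · exact qj
    · exact qk
  rw [sat_iff, genResidual, hfG, hP, hJ]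
  have hde : d - 1 + 2 = d + 1 := by omega
  rw [← hde]
  exact ⟨core_mp hFh hy1h hy2h hG hrel hF0 hy hy2ne hPI hnc,
    core_mpr hFh hy1h hy2h hG hrel hF0 hy hy2ne hPI hPI1⟩

end Aux

/-- **freeness criterion for line arrangements.**  Let `K` have
characteristic zero and let `A` be a set of `d ≥ 3` distinct lines of `ℙ²` that are not
all concurrent, given by pairwise non-proportional linear forms `L i` with
`f_A = Π L i ∈ S = K[x₀,x₁,x₂]`.  Let `ℓ` be a general linear form with dual point
`Q = ℓ∨`, let `r_A = (f_A, ∂f_A/∂ℓ) : Jac(f_A)`, and set `I := r_A ∩ I_Q`.  Then the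
following are equivalent:
(a) `A` is free, i.e. `Jac(f_A)` is saturated (`Jac(f_A) : (x₀,x₁,x₂) = Jac(f_A)`);
(b) `I` is generated by two homogeneous polynomials of degrees `a` and `b` with
`a + b = d + 1` and `a, b ≥ 2`. -/
theorem stmt_16 {K : Type*} [Field K] [CharZero K] {d : ℕ} (hd : 3 ≤ d)
    (L : Fin d → MvPolynomial (Fin 3) K)
    (hhom : ∀ i, (L i).IsHomogeneous 1) (hne : ∀ i, L i ≠ 0)
    (hprop : ∀ i j, i ≠ j → ∀ c : K, L i ≠ c • L j)
    (hnotconc : ¬ ∃ q : Fin 3 → K, q ≠ 0 ∧ ∀ i, eval q (L i) = 0) :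
    ∃ p : MvPolynomial (Fin 3) K, p ≠ 0 ∧
      ∀ a : Fin 3 → K, eval a p ≠ 0 →
        ((jacobianIdeal (∏ i, L i)).colon
            (Ideal.span (Set.range X) : Ideal (MvPolynomial (Fin 3) K)) =
          jacobianIdeal (∏ i, L i) ↔
        ∃ (g h : MvPolynomial (Fin 3) K) (e₁ e₂ : ℕ),
          g.IsHomogeneous e₁ ∧ h.IsHomogeneous e₂ ∧
          e₁ + e₂ = d + 1 ∧ 2 ≤ e₁ ∧ 2 ≤ e₂ ∧
          genResidual a (∏ i, L i) ⊓ pointIdeal a = Ideal.span {g, h}) := by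
  refine ⟨∏ i, L i, Finset.prod_ne_zero_iff.2 fun i _ => hne i, fun a ha => ?_⟩
  have hex : ∃ i, a i ≠ 0 := by
    by_contra hcon
    push Not at hcon
    have ha0 : a = 0 := funext hcon
    apply ha
    rw [map_prod]
    refine Finset.prod_eq_zero (Finset.mem_univ (⟨0, by omega⟩ : Fin d)) ?_
    obtain ⟨c, hc⟩ := lin_form (hhom ⟨0, by omega⟩)
    rw [hc, ha0]
    simp
  obtain ⟨i, hi⟩ := hex
  refine main_aux hd L hhom hne hprop hnotconc a ha i (i + 1) (i + 2) ?_ ?_ ?_ hi ?_ ?_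
  · clear hi; revert i; decide
  · clear hi; revert i; decide
  · clear hi; revert i; decide
  · clear hi; revert i; decide
  · intro g
    rw [Fin.sum_univ_three]
    clear hi
    fin_cases i
    · rfl
    · change g 0 + g 1 + g 2 = g 1 + g 2 + g 0
      ring
    · change g 0 + g 1 + g 2 = g 2 + g 0 + g 1
      ring
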